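/- arXiv:2102.12318 — 9 statements merged into one kernel-verified Lean document; each statement's English description precedes it below -/
import Mathlib

section
/- Let k ∈ {1,…,L} and let Γ* be a top-k classifier with respect to p. Then for every set-valued classifier Γ satisfying |Γ(x)| ≤ k for μ-almost every x, one has error(Γ*) ≤ error(Γ); that is, the top-k classifier minimizes the error rate P(Y ∉ Γ(X)) among all set-valued classifiers whose point-wise size is at most k. -/
open MeasureTheory Finset

lemma topK_sum_le {ι : Type*} [DecidableEq ι] (q : ι → ℝ) (h0 : ∀ i, 0 ≤ q i)
    (S T : Finset ι) (hc : T.card ≤ S.card) (h : ∀ i ∈ S, ∀ m, m ∉ S → q m ≤ q i) :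
    ∑ i ∈ T, q i ≤ ∑ i ∈ S, q i := by
  have key : ∑ i ∈ T \ S, q i ≤ ∑ i ∈ S \ T, q i := by
    rcases (T \ S).eq_empty_or_nonempty with he | hne
    · rw [he, Finset.sum_empty]
      exact Finset.sum_nonneg fun i _ => h0 i
    · obtain ⟨m, hm, hmax⟩ := Finset.exists_max_image (T \ S) q hne
      have hcard : (T \ S).card ≤ (S \ T).card := by
        have h1 := Finset.card_sdiff_add_card_inter T S
        have h2 := Finset.card_sdiff_add_card_inter S T
        rw [Finset.inter_comm S T] at h2
        omega
      calc ∑ i ∈ T \ S, q i ≤ (T \ S).card • q m := Finset.sum_le_card_nsmul _ _ _ hmax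
        _ ≤ (S \ T).card • q m := nsmul_le_nsmul_left (h0 m) hcard
        _ ≤ ∑ i ∈ S \ T, q i := Finset.card_nsmul_le_sum _ _ _ fun i hi =>
            h i (Finset.mem_sdiff.1 hi).1 m (Finset.mem_sdiff.1 hm).2
  have h1 := Finset.sum_inter_add_sum_sdiff T S q
  have h2 := Finset.sum_inter_add_sum_sdiff S T q
  rw [Finset.inter_comm S T] at h2
  linarith

/-- the top-k classifier minimizes the error rate among all
set-valued classifiers whose point-wise size is at most k (μ-a.e.). -/
theorem topK_minimizes_error
    {𝒳 : Type*} [m𝒳 : MeasurableSpace 𝒳] (μ : Measure 𝒳) [IsProbabilityMeasure μ]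
    (L : ℕ) (hL : 1 ≤ L)
    (p : 𝒳 → Fin L → ℝ) (hp : Measurable p)
    (hp0 : ∀ x ℓ, 0 ≤ p x ℓ) (hpsum : ∀ x, ∑ ℓ, p x ℓ = 1)
    (k : ℕ) (hk1 : 1 ≤ k) (hkL : k ≤ L)
    (Γstar : 𝒳 → Finset (Fin L))
    (hΓstarMeas : @Measurable 𝒳 (Finset (Fin L)) m𝒳 ⊤ Γstar)
    (hΓstarCard : ∀ x, (Γstar x).card = k)
    (hΓstarTop : ∀ x, ∀ ℓ ∈ Γstar x, ∀ m, m ∉ Γstar x → p x m ≤ p x ℓ)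
    (Γ : 𝒳 → Finset (Fin L))
    (hΓMeas : @Measurable 𝒳 (Finset (Fin L)) m𝒳 ⊤ Γ)
    (hΓCard : ∀ᵐ x ∂μ, (Γ x).card ≤ k) :
    ∫ x, (1 - ∑ ℓ ∈ Γstar x, p x ℓ) ∂μ ≤ ∫ x, (1 - ∑ ℓ ∈ Γ x, p x ℓ) ∂μ := by
  have hle : ∀ x (A : Finset (Fin L)), ∑ ℓ ∈ A, p x ℓ ≤ 1 := fun x A => by
    rw [← hpsum x]
    exact Finset.sum_le_sum_of_subset_of_nonneg (Finset.subset_univ A) fun i _ _ => hp0 x i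
  have hge : ∀ x (A : Finset (Fin L)), 0 ≤ ∑ ℓ ∈ A, p x ℓ := fun x A =>
    Finset.sum_nonneg fun i _ => hp0 x i
  have hmeas : Measurable fun x => 1 - ∑ ℓ ∈ Γ x, p x ℓ := by
    have heq : (fun x => 1 - ∑ ℓ ∈ Γ x, p x ℓ)
        = fun x => 1 - ∑ ℓ, (Γ ⁻¹' {A | ℓ ∈ A}).indicator (fun x => p x ℓ) x := by
      funext x
      simp [Set.indicator_apply, Finset.sum_ite_mem]
    rw [heq]
    refine measurable_const.sub (Finset.measurable_sum _ fun ℓ _ => ?_)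
    exact (measurable_pi_iff.1 hp ℓ).indicator (hΓMeas trivial)
  refine integral_mono_of_nonneg (ae_of_all _ fun x => sub_nonneg.2 (hle x _)) ?_ ?_
  · refine Integrable.of_bound hmeas.aestronglyMeasurable 1 (ae_of_all _ fun x => ?_)
    rw [Real.norm_eq_abs, abs_le]
    constructor <;> linarith [hle x (Γ x), hge x (Γ x)]
  · filter_upwards [hΓCard] with x hx
    have := topK_sum_le (p x) (hp0 x) (Γstar x) (Γ x) (by rw [hΓstarCard]; exact hx) (hΓstarTop x)
    linarith
end

section
/- Fix ε ∈ [0,1) and let Γ*_ε be a measurable set-valued classifier such that for every x ∈ 𝒳, |Γ*_ε(x)| = k_ε(x) and p_ℓ(x) ≥ p_m(x) whenever ℓ ∈ Γ*_ε(x) and m ∉ Γ*_ε(x) (i.e. Γ*_ε(x) consists of the k_ε(x) most probable classes at x). Then (i) ∑_{ℓ ∈ Γ*_ε(x)} p_ℓ(x) ≥ 1 − ε for every x, so Γ*_ε satisfies the point-wise error constraint P(Y ∉ Γ(X) | X = x) ≤ ε; and (ii) for every set-valued classifier Γ satisfying ∑_{ℓ ∈ Γ(x)} p_ℓ(x) ≥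 1 − ε for every x, one has |Γ*_ε(x)| ≤ |Γ(x)| for every x, and consequently size(Γ*_ε) ≤ size(Γ). -/
open MeasureTheory Finset

/-- `sortedDesc q j` is the (j+1)-th largest value among `q 0, …, q (L-1)`. -/
noncomputable def sortedDesc {L : ℕ} (q : Fin L → ℝ) : Fin L → ℝ :=
  fun j => q (Tuple.sort q j.rev)

/-- Sum of the `k` largest values of `q`. -/
noncomputable def topSum {L : ℕ} (q : Fin L → ℝ) (k : ℕ) : ℝ :=
  ∑ j ∈ Finset.univ.filter (fun j : Fin L => (j : ℕ) < k), sortedDesc q j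

/-- `kEps L q ε` = min{k ∈ {1,…,L} : sum of k largest values of q ≥ 1 - ε}. -/
noncomputable def kEps (L : ℕ) (q : Fin L → ℝ) (ε : ℝ) : ℕ :=
  sInf {k : ℕ | 1 ≤ k ∧ k ≤ L ∧ 1 - ε ≤ topSum q k}

lemma sum_le_of_top {L : ℕ} (q : Fin L → ℝ) (A B : Finset (Fin L)) (hc : B.card = A.card)
    (hA : ∀ l ∈ A, ∀ m, m ∉ A → q m ≤ q l) : ∑ l ∈ B, q l ≤ ∑ l ∈ A, q l := by
  classical
  have hcard : (B \ A).card = (A \ B).card := by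
    have h1 := Finset.card_sdiff_add_card_inter A B
    have h2 := Finset.card_sdiff_add_card_inter B A
    rw [Finset.inter_comm B A] at h2
    omega
  have hB := Finset.sum_inter_add_sum_sdiff B A q
  have hA' := Finset.sum_inter_add_sum_sdiff A B q
  rw [Finset.inter_comm B A] at hB
  have key : ∑ l ∈ B \ A, q l ≤ ∑ l ∈ A \ B, q l := by
    rcases (A \ B).eq_empty_or_nonempty with h | h
    · have : B \ A = ∅ := by rw [← Finset.card_eq_zero, hcard, h]; rfl
      rw [h, this]
    · obtain ⟨a, ha, hmin⟩ := Finset.exists_min_image (A \ B) q h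
      calc ∑ l ∈ B \ A, q l ≤ (B \ A).card • q a :=
            Finset.sum_le_card_nsmul _ _ _ (fun m hm =>
              hA a (Finset.mem_sdiff.1 ha).1 m (Finset.mem_sdiff.1 hm).2)
        _ = (A \ B).card • q a := by rw [hcard]
        _ ≤ _ := Finset.card_nsmul_le_sum _ _ _ hmin
  linarith

lemma exists_topSet {L : ℕ} (q : Fin L → ℝ) (k : ℕ) (hk : k ≤ L) :
    ∃ T : Finset (Fin L), T.card = k ∧ (∀ l ∈ T, ∀ m, m ∉ T → q m ≤ q l) ∧
      topSum q k = ∑ l ∈ T, q l := by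
  classical
  let e : Fin L ≃ Fin L := Fin.revPerm.trans (Tuple.sort q)
  refine ⟨(Finset.univ.filter (fun j : Fin L => (j : ℕ) < k)).map e.toEmbedding, ?_, ?_, ?_⟩
  · rw [Finset.card_map, Fin.card_filter_val_lt]
    omega
  · intro l hl m hm
    obtain ⟨i, rfl⟩ := e.surjective l
    obtain ⟨j, rfl⟩ := e.surjective m
    simp at hl hm
    have hij : j.rev ≤ i.rev := by
      rw [Fin.rev_le_rev, Fin.le_def]; omega
    exact Tuple.monotone_sort q hij
  · rw [Finset.sum_map]
    rfl

lemma integrable_card {𝒳 : Type*} [m𝒳 : MeasurableSpace 𝒳] (μ : Measure 𝒳)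
    [IsProbabilityMeasure μ] (L : ℕ) (G : 𝒳 → Finset (Fin L))
    (hG : @Measurable 𝒳 (Finset (Fin L)) m𝒳 ⊤ G) :
    Integrable (fun x => ((G x).card : ℝ)) μ := by
  letI : MeasurableSpace (Finset (Fin L)) := ⊤
  have hm : Measurable (fun x => ((G x).card : ℝ)) :=
    (measurable_from_top (f := fun s : Finset (Fin L) => (s.card : ℝ))).comp hG
  refine Integrable.of_bound hm.aestronglyMeasurable (L : ℝ) (Filter.Eventually.of_forall ?_)
  intro x
  have := Finset.card_le_univ (G x)
  simp at this ⊢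
  exact this

/-- the classifier predicting the `k_ε(x)` most probable classes
satisfies the point-wise error constraint and minimizes the point-wise size
(hence the average size) among classifiers satisfying the point-wise error
constraint. -/
theorem pointwise_error_control_oracle
    {𝒳 : Type*} [m𝒳 : MeasurableSpace 𝒳] (μ : Measure 𝒳) [IsProbabilityMeasure μ]
    (L : ℕ) (hL : 1 ≤ L)
    (p : 𝒳 → Fin L → ℝ) (hp : Measurable p)
    (hp0 : ∀ x ℓ, 0 ≤ p x ℓ) (hpsum : ∀ x, ∑ ℓ, p x ℓ = 1)
    (ε : ℝ) (hε0 : 0 ≤ ε) (hε1 : ε < 1)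
    (Γstar : 𝒳 → Finset (Fin L))
    (hΓstarMeas : @Measurable 𝒳 (Finset (Fin L)) m𝒳 ⊤ Γstar)
    (hΓstarCard : ∀ x, (Γstar x).card = kEps L (p x) ε)
    (hΓstarTop : ∀ x, ∀ ℓ ∈ Γstar x, ∀ m, m ∉ Γstar x → p x m ≤ p x ℓ) :
    (∀ x, 1 - ε ≤ ∑ ℓ ∈ Γstar x, p x ℓ) ∧
    (∀ Γ : 𝒳 → Finset (Fin L), @Measurable 𝒳 (Finset (Fin L)) m𝒳 ⊤ Γ →
      (∀ x, 1 - ε ≤ ∑ ℓ ∈ Γ x, p x ℓ) →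
      (∀ x, (Γstar x).card ≤ (Γ x).card) ∧
      (∫ x, ((Γstar x).card : ℝ) ∂μ) ≤ ∫ x, ((Γ x).card : ℝ) ∂μ) := by
  have hmem : ∀ x, 1 ≤ kEps L (p x) ε ∧ kEps L (p x) ε ≤ L ∧
      1 - ε ≤ topSum (p x) (kEps L (p x) ε) := by
    intro x
    refine Nat.sInf_mem (s := {k : ℕ | 1 ≤ k ∧ k ≤ L ∧ 1 - ε ≤ topSum (p x) k}) ⟨L, hL, le_rfl, ?_⟩
    obtain ⟨T, hT, -, hs⟩ := exists_topSet (p x) L le_rfl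
    have : T = Finset.univ := by
      rw [← Finset.card_eq_iff_eq_univ, hT, Fintype.card_fin]
    rw [hs, this, hpsum]
    linarith
  refine ⟨fun x => ?_, fun Γ hΓ hc => ?_⟩
  · obtain ⟨h1, h2, h3⟩ := hmem x
    obtain ⟨T, hT, -, hs⟩ := exists_topSet (p x) _ h2
    rw [hs] at h3
    exact h3.trans (sum_le_of_top _ _ _ (hT.trans (hΓstarCard x).symm) (hΓstarTop x))
  · have hcard : ∀ x, (Γstar x).card ≤ (Γ x).card := by
      intro x
      rw [hΓstarCard]
      have hle : (Γ x).card ≤ L := by simpa using Finset.card_le_univ (Γ x)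
      obtain ⟨T, hT, htop, hs⟩ := exists_topSet (p x) _ hle
      refine Nat.sInf_le ⟨?_, hle, ?_⟩
      · by_contra h
        have h0 : Γ x = ∅ := by rw [← Finset.card_eq_zero]; omega
        have := hc x
        rw [h0, Finset.sum_empty] at this
        linarith
      · rw [hs]
        exact (hc x).trans (sum_le_of_top _ _ _ hT.symm htop)
    refine ⟨hcard, integral_mono (integrable_card μ L _ hΓstarMeas) (integrable_card μ L _ hΓ) ?_⟩
    intro x
    exact Nat.cast_le.2 (hcard x)
end

section
/- Fix λ ≥ 0 and define the set-valued classifier Γ*_λ by Γ*_λ(x) = {ℓ ∈ Fin L : p_ℓ(x) ≥ λ} for every x ∈ 𝒳. Then Γ*_λ minimizes the penalized risk: for every set-valued classifier Γ, error(Γ*_λ) + λ·size(Γ*_λ) ≤ error(Γ) + λ·size(Γ). -/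
open MeasureTheory Finset

lemma integrable_aux {𝒳 : Type*} [MeasurableSpace 𝒳] (μ : Measure 𝒳) [IsProbabilityMeasure μ]
    (L : ℕ) (q : 𝒳 → Fin L → ℝ) (hq : Measurable q)
    (hq0 : ∀ x ℓ, 0 ≤ q x ℓ) (hq1 : ∀ x ℓ, q x ℓ ≤ 1)
    (G : 𝒳 → Finset (Fin L)) (hG : ∀ ℓ, MeasurableSet {x | ℓ ∈ G x}) :
    Integrable (fun x => ∑ ℓ ∈ G x, q x ℓ) μ := by
  have h : (fun x => ∑ ℓ ∈ G x, q x ℓ)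
      = fun x => ∑ ℓ, Set.indicator {x | ℓ ∈ G x} (fun x => q x ℓ) x := by
    funext x
    simp [Set.indicator_apply, Finset.sum_ite_mem]
  rw [h]
  refine integrable_finsetSum _ fun ℓ _ => Integrable.indicator ?_ (hG ℓ)
  refine Integrable.of_bound (C := 1) ((measurable_pi_apply ℓ).comp hq).aestronglyMeasurable ?_
  refine Filter.Eventually.of_forall fun x => ?_
  rw [Real.norm_eq_abs, abs_of_nonneg (hq0 x ℓ)]
  exact hq1 x ℓ

/-- the thresholding classifier Γ*_λ(x) = {ℓ : p_ℓ(x) ≥ λ}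
minimizes the penalized risk error(Γ) + λ·size(Γ). -/
theorem penalized_oracle
    {𝒳 : Type*} [m𝒳 : MeasurableSpace 𝒳] (μ : Measure 𝒳) [IsProbabilityMeasure μ]
    (L : ℕ) (hL : 1 ≤ L)
    (p : 𝒳 → Fin L → ℝ) (hp : Measurable p)
    (hp0 : ∀ x ℓ, 0 ≤ p x ℓ) (hpsum : ∀ x, ∑ ℓ, p x ℓ = 1)
    (lam : ℝ) (hlam : 0 ≤ lam)
    (Γstar : 𝒳 → Finset (Fin L))
    (hΓstar : ∀ x, Γstar x = Finset.univ.filter (fun ℓ => lam ≤ p x ℓ))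
    (Γ : 𝒳 → Finset (Fin L))
    (hΓMeas : @Measurable 𝒳 (Finset (Fin L)) m𝒳 ⊤ Γ) :
    (∫ x, (1 - ∑ ℓ ∈ Γstar x, p x ℓ) ∂μ) + lam * ∫ x, ((Γstar x).card : ℝ) ∂μ ≤
      (∫ x, (1 - ∑ ℓ ∈ Γ x, p x ℓ) ∂μ) + lam * ∫ x, ((Γ x).card : ℝ) ∂μ := by
  have hp1 : ∀ x ℓ, p x ℓ ≤ 1 := fun x ℓ => by
    rw [← hpsum x]
    exact Finset.single_le_sum (fun i _ => hp0 x i) (Finset.mem_univ ℓ)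
  have hS : ∀ ℓ, MeasurableSet {x | ℓ ∈ Γstar x} := fun ℓ => by
    simp only [hΓstar, Finset.mem_filter, Finset.mem_univ, true_and]
    exact measurableSet_le measurable_const ((measurable_pi_apply ℓ).comp hp)
  have hT : ∀ ℓ, MeasurableSet {x | ℓ ∈ Γ x} := fun ℓ =>
    hΓMeas (t := {s | ℓ ∈ s}) trivial
  have key : ∀ G : 𝒳 → Finset (Fin L), (∀ ℓ, MeasurableSet {x | ℓ ∈ G x}) →
      Integrable (fun x => 1 - ∑ ℓ ∈ G x, p x ℓ) μ ∧
      Integrable (fun x => lam * ((G x).card : ℝ)) μ := fun G hG => by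
    refine ⟨(integrable_const 1).sub (integrable_aux μ L p hp hp0 hp1 G hG), ?_⟩
    have h := integrable_aux μ L (fun _ _ => 1) measurable_const (by simp) (by simp) G hG
    simp only [Finset.sum_const, nsmul_eq_mul, mul_one] at h
    exact h.const_mul lam
  obtain ⟨a1, a2⟩ := key Γstar hS
  obtain ⟨b1, b2⟩ := key Γ hT
  rw [← integral_const_mul, ← integral_const_mul, ← integral_add a1 a2, ← integral_add b1 b2]
  refine integral_mono (a1.add a2) (b1.add b2) fun x => ?_
  have e : ∀ s : Finset (Fin L), (1 - ∑ ℓ ∈ s, p x ℓ) + lam * (s.card : ℝ)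
      = 1 - ∑ ℓ, if ℓ ∈ s then p x ℓ - lam else 0 := fun s => by
    simp [Finset.sum_ite_mem, Finset.sum_sub_distrib]
    ring
  change (1 - ∑ ℓ ∈ Γstar x, p x ℓ) + lam * ((Γstar x).card : ℝ)
    ≤ (1 - ∑ ℓ ∈ Γ x, p x ℓ) + lam * ((Γ x).card : ℝ)
  rw [e, e]
  refine sub_le_sub_left (Finset.sum_le_sum fun ℓ _ => ?_) 1
  simp only [hΓstar, Finset.mem_filter, Finset.mem_univ, true_and]
  split_ifs <;> linarith
end

section
/- Assume the nonatomicity assumption and fix a real number k̄ ∈ (0, L). Define G(t) = ∑_{ℓ=1}^L μ({x : p_ℓ(x) ≥ t}) for t ∈ ℝ, and define the set-valued classifier Γ*_{k̄} by Γ*_{k̄}(x) = {ℓ ∈ Fin L : p_ℓ(x) ≥ G^{-1}(k̄)}, where G^{-1} is the generalized inverse of G. Then Γ*_{k̄} is feasible, i.e. size(Γ*_{k̄}) ≤ k̄, and it is optimal: every set-valued classifier Γ with size(Γ) ≤ k̄ satisfies error(Γ*_{k̄}) ≤ error(Γ). -/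
open MeasureTheory Finset

lemma G_cont_aux {X : Type*} [MeasurableSpace X] (μ : Measure X) [IsProbabilityMeasure μ]
    (f : X → ℝ) (hf : Measurable f) (h : ∀ t : ℝ, μ {x | f x = t} = 0) :
    Continuous (fun t : ℝ => (μ {x | t ≤ f x}).toReal) := by
  have e : (fun t : ℝ => (μ {x | t ≤ f x}).toReal)
      = fun t => ∫ x, (if t ≤ f x then (1 : ℝ) else 0) ∂μ := by
    funext t
    have hm : MeasurableSet {x | t ≤ f x} := measurableSet_le measurable_const hf
    have := integral_indicator_one (μ := μ) hm
    rw [← measureReal_def, ← this]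
    rfl
  rw [e, continuous_iff_continuousAt]
  intro t
  refine continuousAt_of_dominated (bound := fun _ => (1 : ℝ)) ?_ ?_ (integrable_const _) ?_
  · refine Filter.Eventually.of_forall fun s => ?_
    exact (Measurable.ite (measurableSet_le measurable_const hf)
      measurable_const measurable_const).aestronglyMeasurable
  · refine Filter.Eventually.of_forall fun s => Filter.Eventually.of_forall fun x => ?_
    split_ifs <;> simp
  · have : ∀ᵐ x ∂μ, f x ≠ t := by
      rw [ae_iff]; simpa using h t
    filter_upwards [this] with x hx
    rcases lt_or_gt_of_ne hx with h1 | h1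
    · refine (continuousAt_const (y := (0 : ℝ))).congr ?_
      filter_upwards [lt_mem_nhds h1] with s hs
      rw [if_neg (not_le.mpr hs)]
    · refine (continuousAt_const (y := (1 : ℝ))).congr ?_
      filter_upwards [gt_mem_nhds h1] with s hs
      rw [if_pos hs.le]

/-- under nonatomicity, the thresholding classifier at level
G⁻¹(k̄) is feasible for the average size constraint and minimizes the error
rate among all classifiers of average size at most k̄. -/
theorem average_size_control_oracle
    {𝒳 : Type*} [m𝒳 : MeasurableSpace 𝒳] (μ : Measure 𝒳) [IsProbabilityMeasure μ]
    (L : ℕ) (hL : 1 ≤ L)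
    (p : 𝒳 → Fin L → ℝ) (hp : Measurable p)
    (hp0 : ∀ x ℓ, 0 ≤ p x ℓ) (hpsum : ∀ x, ∑ ℓ, p x ℓ = 1)
    (hatom : ∀ (ℓ : Fin L) (t : ℝ), μ {x | p x ℓ = t} = 0)
    (kbar : ℝ) (hkbar0 : 0 < kbar) (hkbarL : kbar < L)
    (G : ℝ → ℝ) (hG : G = fun t => ∑ ℓ : Fin L, (μ {x | t ≤ p x ℓ}).toReal)
    (θ : ℝ) (hθ : θ = sInf {t : ℝ | G t ≤ kbar})
    (Γstar : 𝒳 → Finset (Fin L))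
    (hΓstar : ∀ x, Γstar x = Finset.univ.filter (fun ℓ => θ ≤ p x ℓ)) :
    (∫ x, ((Γstar x).card : ℝ) ∂μ) ≤ kbar ∧
    ∀ Γ : 𝒳 → Finset (Fin L), @Measurable 𝒳 (Finset (Fin L)) m𝒳 ⊤ Γ →
      (∫ x, ((Γ x).card : ℝ) ∂μ) ≤ kbar →
      (∫ x, (1 - ∑ ℓ ∈ Γstar x, p x ℓ) ∂μ) ≤ ∫ x, (1 - ∑ ℓ ∈ Γ x, p x ℓ) ∂μ := by
  have hpm : ∀ ℓ, Measurable fun x => p x ℓ := fun ℓ => (measurable_pi_apply ℓ).comp hp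
  have hGc : Continuous G := by
    rw [hG]
    exact continuous_finsetSum _ fun ℓ _ => G_cont_aux μ _ (hpm ℓ) (hatom ℓ)
  have hp1 : ∀ x ℓ, p x ℓ ≤ 1 := fun x ℓ => by
    rw [← hpsum x]
    exact Finset.single_le_sum (f := p x) (fun i _ => hp0 x i) (Finset.mem_univ ℓ)
  have hG0 : ∀ t ≤ 0, G t = L := by
    intro t ht
    have : ∀ ℓ, {x | t ≤ p x ℓ} = Set.univ := fun ℓ => by
      ext x; simpa using ht.trans (hp0 x ℓ)
    simp [hG, this]
  have hG2 : G 2 = 0 := by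
    have : ∀ ℓ, {x | 2 ≤ p x ℓ} = ∅ := fun ℓ => by
      ext x; simpa using (hp1 x ℓ).trans_lt one_lt_two
    simp [hG, this]
  have hlb : ∀ t ∈ {t : ℝ | G t ≤ kbar}, 0 ≤ t := by
    intro t ht
    by_contra hc
    have h1 : G t ≤ kbar := ht
    rw [hG0 t (not_le.mp hc).le] at h1
    linarith
  have hbdd : BddBelow {t : ℝ | G t ≤ kbar} := ⟨0, hlb⟩
  have hne : {t : ℝ | G t ≤ kbar}.Nonempty := ⟨2, by simp [hG2, hkbar0.le]⟩
  have hclosed : IsClosed {t : ℝ | G t ≤ kbar} := isClosed_le hGc continuous_const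
  have hmem : G θ ≤ kbar := by
    rw [hθ]; exact hclosed.csInf_mem hne hbdd
  have hθ0 : 0 ≤ θ := hlb θ hmem
  have hge : kbar ≤ G θ := by
    by_contra hc
    have hc := not_le.mp hc
    have h1 : ∀ᶠ s in nhds θ, G s < kbar := hGc.continuousAt.eventually_lt continuousAt_const hc
    obtain ⟨s, hs1, hs2⟩ := ((h1.filter_mono nhdsWithin_le_nhds).and
      (self_mem_nhdsWithin : Set.Iio θ ∈ nhdsWithin θ (Set.Iio θ))).exists
    have h3 : θ ≤ s := by rw [hθ]; exact csInf_le hbdd (le_of_lt hs1)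
    exact absurd hs2 (not_lt.mpr h3)
  have hGθ : G θ = kbar := le_antisymm hmem hge
  -- general facts on classifiers
  have key : ∀ Γ : 𝒳 → Finset (Fin L), (∀ ℓ, MeasurableSet {x | ℓ ∈ Γ x}) →
      Integrable (fun x => ((Γ x).card : ℝ)) μ ∧ Integrable (fun x => ∑ ℓ ∈ Γ x, p x ℓ) μ := by
    intro Γ hΓ
    constructor
    · have e : (fun x => ((Γ x).card : ℝ))
          = fun x => ∑ ℓ, ({x | ℓ ∈ Γ x}.indicator (fun _ => (1 : ℝ)) x) := by
        funext x; simp [Set.indicator_apply]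
      rw [e]
      exact integrable_finsetSum _ fun ℓ _ => (integrable_const _).indicator (hΓ ℓ)
    · have e : (fun x => ∑ ℓ ∈ Γ x, p x ℓ)
          = fun x => ∑ ℓ, ({x | ℓ ∈ Γ x}.indicator (fun x => p x ℓ) x) := by
        funext x; simp [Set.indicator_apply, Finset.sum_ite_mem]
      rw [e]
      refine integrable_finsetSum _ fun ℓ _ => Integrable.indicator ?_ (hΓ ℓ)
      refine Integrable.of_bound (hpm ℓ).aestronglyMeasurable 1 ?_
      refine Filter.Eventually.of_forall fun x => ?_
      rw [Real.norm_eq_abs, abs_of_nonneg (hp0 x ℓ)]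
      exact hp1 x ℓ
  have hsm : ∀ ℓ, MeasurableSet {x | ℓ ∈ Γstar x} := by
    intro ℓ
    have : {x | ℓ ∈ Γstar x} = {x | θ ≤ p x ℓ} := by ext x; simp [hΓstar]
    rw [this]
    exact measurableSet_le measurable_const (hpm ℓ)
  have hsize : (∫ x, ((Γstar x).card : ℝ) ∂μ) = kbar := by
    rw [← hGθ, hG]
    have e : (fun x => ((Γstar x).card : ℝ))
          = fun x => ∑ ℓ, ({x | ℓ ∈ Γstar x}.indicator (1 : 𝒳 → ℝ) x) := by
        funext x; simp [Set.indicator_apply]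
    have hi : ∀ ℓ ∈ (Finset.univ : Finset (Fin L)),
        Integrable ({x | ℓ ∈ Γstar x}.indicator (1 : 𝒳 → ℝ)) μ :=
      fun ℓ _ => (integrable_const (1 : ℝ)).indicator (hsm ℓ)
    rw [e, integral_finsetSum _ hi]
    refine Finset.sum_congr rfl fun ℓ _ => ?_
    rw [integral_indicator_one (hsm ℓ), measureReal_def]
    simp [hΓstar]
  refine ⟨hsize.le, fun Γ hΓ hk => ?_⟩
  have hm : ∀ ℓ, MeasurableSet {x | ℓ ∈ Γ x} := fun ℓ =>
    @Measurable.comp _ _ _ m𝒳 ⊤ ⊤ (fun s : Finset (Fin L) => ℓ ∈ s) Γ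
      (fun _ _ => trivial) hΓ {True} trivial |> fun h => by
        convert h using 1
        ext x; simp
  obtain ⟨i1, i2⟩ := key Γ hm
  obtain ⟨j1, j2⟩ := key Γstar hsm
  have hpt : ∀ x, (∑ ℓ ∈ Γ x, p x ℓ) - θ * ((Γ x).card : ℝ)
      ≤ (∑ ℓ ∈ Γstar x, p x ℓ) - θ * ((Γstar x).card : ℝ) := by
    intro x
    have e : ∀ s : Finset (Fin L), (∑ ℓ ∈ s, p x ℓ) - θ * (s.card : ℝ)
        = ∑ ℓ, if ℓ ∈ s then p x ℓ - θ else 0 := by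
      intro s
      simp [Finset.sum_ite_mem, Finset.sum_sub_distrib, mul_comm]
    rw [e, e]
    refine Finset.sum_le_sum fun ℓ _ => ?_
    rw [hΓstar]
    simp only [Finset.mem_filter, Finset.mem_univ, true_and]
    split_ifs <;> linarith
  have hint := integral_mono (i2.sub (i1.const_mul θ)) (j2.sub (j1.const_mul θ)) hpt
  simp only [Pi.sub_apply] at hint
  rw [integral_sub i2 (i1.const_mul θ), integral_sub j2 (j1.const_mul θ),
    integral_const_mul, integral_const_mul, hsize] at hint
  rw [integral_sub (integrable_const _) i2, integral_sub (integrable_const _) j2]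
  have := mul_le_mul_of_nonneg_left hk hθ0
  linarith
end

section
/- Assume the nonatomicity assumption and fix ε̄ ∈ (0, 1). Define H(t) = ∫ ∑_{ℓ=1}^L p_ℓ(x)·1{p_ℓ(x) ≥ t} dμ(x) for t ∈ ℝ (equal to P(p_Y(X) ≥ t)), and define the set-valued classifier Γ*_{ε̄} by Γ*_{ε̄}(x) = {ℓ ∈ Fin L : p_ℓ(x) ≥ H^{-1}(1 − ε̄)}, where H^{-1} is the generalized inverse of H. Then Γ*_{ε̄} is feasible, i.e. error(Γ*_{ε̄}) ≤ ε̄, and it is optimal: every set-valued classifier Γ with error(Γ) ≤ ε̄ satisfies size(Γ*_{ε̄}) ≤ size(Γ). -/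
open MeasureTheory Finset

/-- under nonatomicity, the thresholding classifier at level
H⁻¹(1 - ε̄) is feasible for the average error constraint and minimizes the
average size among all classifiers of average error at most ε̄. -/
theorem average_error_control_oracle
    {𝒳 : Type*} [m𝒳 : MeasurableSpace 𝒳] (μ : Measure 𝒳) [IsProbabilityMeasure μ]
    (L : ℕ) (hL : 1 ≤ L)
    (p : 𝒳 → Fin L → ℝ) (hp : Measurable p)
    (hp0 : ∀ x ℓ, 0 ≤ p x ℓ) (hpsum : ∀ x, ∑ ℓ, p x ℓ = 1)
    (hatom : ∀ (ℓ : Fin L) (t : ℝ), μ {x | p x ℓ = t} = 0)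
    (εbar : ℝ) (hεbar0 : 0 < εbar) (hεbar1 : εbar < 1)
    (H : ℝ → ℝ)
    (hH : H = fun t => ∫ x, ∑ ℓ : Fin L, (if t ≤ p x ℓ then p x ℓ else 0) ∂μ)
    (θ : ℝ) (hθ : θ = sInf {t : ℝ | H t ≤ 1 - εbar})
    (Γstar : 𝒳 → Finset (Fin L))
    (hΓstar : ∀ x, Γstar x = Finset.univ.filter (fun ℓ => θ ≤ p x ℓ)) :
    (∫ x, (1 - ∑ ℓ ∈ Γstar x, p x ℓ) ∂μ) ≤ εbar ∧
    ∀ Γ : 𝒳 → Finset (Fin L), @Measurable 𝒳 (Finset (Fin L)) m𝒳 ⊤ Γ →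
      (∫ x, (1 - ∑ ℓ ∈ Γ x, p x ℓ) ∂μ) ≤ εbar →
      (∫ x, ((Γstar x).card : ℝ) ∂μ) ≤ ∫ x, ((Γ x).card : ℝ) ∂μ := by
  have hpm : ∀ ℓ, Measurable fun x => p x ℓ := fun ℓ => (measurable_pi_apply ℓ).comp hp
  have hp1 : ∀ x ℓ, p x ℓ ≤ 1 := fun x ℓ => by
    rw [← hpsum x]
    exact Finset.single_le_sum (f := fun ℓ => p x ℓ) (fun i _ => hp0 x i) (Finset.mem_univ ℓ)
  have hFm : ∀ t : ℝ, Measurable fun x => ∑ ℓ : Fin L, (if t ≤ p x ℓ then p x ℓ else 0) := by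
    intro t
    refine Finset.measurable_sum _ fun ℓ _ => ?_
    exact Measurable.ite (measurableSet_le measurable_const (hpm ℓ)) (hpm ℓ) measurable_const
  have hF0 : ∀ (t : ℝ) x, 0 ≤ ∑ ℓ : Fin L, (if t ≤ p x ℓ then p x ℓ else 0) := by
    intro t x
    refine Finset.sum_nonneg fun ℓ _ => ?_
    split_ifs
    · exact hp0 x ℓ
    · exact le_rfl
  have hF1 : ∀ (t : ℝ) x, ∑ ℓ : Fin L, (if t ≤ p x ℓ then p x ℓ else 0) ≤ 1 := by
    intro t x
    rw [← hpsum x]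
    refine Finset.sum_le_sum fun ℓ _ => ?_
    split_ifs
    · exact le_rfl
    · exact hp0 x ℓ
  have hFn : ∀ (t : ℝ) x, ‖∑ ℓ : Fin L, (if t ≤ p x ℓ then p x ℓ else 0)‖ ≤ 1 := by
    intro t x
    rw [Real.norm_eq_abs, abs_of_nonneg (hF0 t x)]
    exact hF1 t x
  have hFi : ∀ t : ℝ, Integrable (fun x => ∑ ℓ : Fin L, (if t ≤ p x ℓ then p x ℓ else 0)) μ :=
    fun t => Integrable.of_bound (hFm t).aestronglyMeasurable 1 (Filter.Eventually.of_forall (hFn t))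
  have hHc : Continuous H := by
    rw [continuous_iff_continuousAt]
    intro t0
    rw [hH]
    refine continuousAt_of_dominated (bound := fun _ => 1)
      (Filter.Eventually.of_forall fun t => (hFm t).aestronglyMeasurable)
      (Filter.Eventually.of_forall fun t => Filter.Eventually.of_forall (hFn t))
      (integrable_const _) ?_
    have hne : ∀ᵐ x ∂μ, ∀ ℓ, p x ℓ ≠ t0 := by
      rw [ae_all_iff]
      intro ℓ
      rw [ae_iff]
      simpa using hatom ℓ t0
    filter_upwards [hne] with x hx
    refine tendsto_finsetSum _ fun ℓ _ => ?_
    rcases lt_or_gt_of_ne (hx ℓ) with h | h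
    · rw [if_neg (not_le.mpr h)]
      refine tendsto_const_nhds.congr' ?_
      filter_upwards [lt_mem_nhds h] with t ht
      rw [if_neg (not_le.mpr ht)]
    · rw [if_pos h.le]
      refine tendsto_const_nhds.congr' ?_
      filter_upwards [gt_mem_nhds h] with t ht
      rw [if_pos (le_of_lt ht)]
  have hHneg : ∀ t ≤ 0, H t = 1 := by
    intro t ht
    have : ∀ x, ∑ ℓ : Fin L, (if t ≤ p x ℓ then p x ℓ else 0) = 1 := fun x => by
      rw [← hpsum x]
      exact Finset.sum_congr rfl fun ℓ _ => if_pos (ht.trans (hp0 x ℓ))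
    simp [hH, this]
  have hH2 : H 2 = 0 := by
    have : ∀ x, ∑ ℓ : Fin L, (if (2:ℝ) ≤ p x ℓ then p x ℓ else 0) = 0 := fun x =>
      Finset.sum_eq_zero fun ℓ _ => if_neg (by linarith [hp1 x ℓ])
    simp [hH, this]
  have hbdd : BddBelow {t : ℝ | H t ≤ 1 - εbar} := by
    refine ⟨0, fun t ht => ?_⟩
    by_contra hc
    have h1 := hHneg t (not_le.mp hc).le
    have h2 : H t ≤ 1 - εbar := ht
    linarith
  have hne : {t : ℝ | H t ≤ 1 - εbar}.Nonempty := ⟨2, by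
    show H 2 ≤ 1 - εbar
    linarith⟩
  have hcl : IsClosed {t : ℝ | H t ≤ 1 - εbar} := isClosed_le hHc continuous_const
  have hle : H θ ≤ 1 - εbar := by
    rw [hθ]
    exact hcl.csInf_mem hne hbdd
  have hge : 1 - εbar ≤ H θ := by
    by_contra hc
    have hev := hHc.continuousAt.eventually (gt_mem_nhds (not_le.mp hc))
    obtain ⟨a, ha, hs⟩ := exists_Ioc_subset_of_mem_nhds hev (exists_lt θ)
    have hmid : (a + θ) / 2 ∈ Set.Ioc a θ := ⟨by linarith, by linarith⟩
    have h1 : H ((a + θ) / 2) < 1 - εbar := hs hmid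
    have h2 : sInf {t : ℝ | H t ≤ 1 - εbar} ≤ (a + θ) / 2 := csInf_le hbdd h1.le
    rw [← hθ] at h2
    linarith
  have hθ0 : 0 < θ := by
    by_contra hc
    have := hHneg θ (not_lt.mp hc)
    linarith
  have hsum : ∀ x, ∑ ℓ ∈ Γstar x, p x ℓ = ∑ ℓ : Fin L, (if θ ≤ p x ℓ then p x ℓ else 0) := by
    intro x
    rw [hΓstar x, Finset.sum_filter]
  have hHθ : H θ = ∫ x, ∑ ℓ ∈ Γstar x, p x ℓ ∂μ := by
    simp only [hsum, hH]
  have hSi : Integrable (fun x => ∑ ℓ ∈ Γstar x, p x ℓ) μ := by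
    simp only [hsum]
    exact hFi θ
  have herr : ∀ f : 𝒳 → ℝ, Integrable f μ → ∫ x, (1 - f x) ∂μ = 1 - ∫ x, f x ∂μ := by
    intro f hf
    rw [integral_sub (integrable_const _) hf]
    simp
  refine ⟨?_, fun Γ hΓ hΓe => ?_⟩
  · rw [herr _ hSi, ← hHθ]
    linarith
  have hmem : ∀ ℓ, MeasurableSet {x | ℓ ∈ Γ x} := fun ℓ =>
    hΓ (t := {s | ℓ ∈ s}) trivial
  have hGsum : ∀ x, ∑ ℓ ∈ Γ x, p x ℓ = ∑ ℓ : Fin L, (if ℓ ∈ Γ x then p x ℓ else 0) := by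
    intro x
    simp
  have hGi : Integrable (fun x => ∑ ℓ ∈ Γ x, p x ℓ) μ := by
    refine Integrable.of_bound (C := 1) ?_ (Filter.Eventually.of_forall fun x => ?_)
    · simp only [hGsum]
      exact (Finset.measurable_sum _ fun ℓ _ =>
        Measurable.ite (hmem ℓ) (hpm ℓ) measurable_const).aestronglyMeasurable
    · rw [Real.norm_eq_abs, abs_of_nonneg (Finset.sum_nonneg fun i _ => hp0 x i), ← hpsum x]
      exact Finset.sum_le_sum_of_subset_of_nonneg (Finset.subset_univ _) fun i _ _ => hp0 x i
  have hcard : ∀ G : 𝒳 → Finset (Fin L), (∀ ℓ, MeasurableSet {x | ℓ ∈ G x}) →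
      Integrable (fun x => ((G x).card : ℝ)) μ := by
    intro G hG
    refine Integrable.of_bound (C := L) ?_ (Filter.Eventually.of_forall fun x => ?_)
    · have : ∀ x, ((G x).card : ℝ) = ∑ ℓ : Fin L, (if ℓ ∈ G x then (1:ℝ) else 0) := by
        intro x
        simp
      simp only [this]
      exact (Finset.measurable_sum _ fun ℓ _ =>
        Measurable.ite (hG ℓ) measurable_const measurable_const).aestronglyMeasurable
    · rw [Real.norm_eq_abs, abs_of_nonneg (Nat.cast_nonneg _)]
      exact_mod_cast (Finset.card_le_univ (G x)).trans_eq (Fintype.card_fin L)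
  have hGc := hcard Γ hmem
  have hSc := hcard Γstar fun ℓ => by
    simp only [hΓstar, Finset.mem_filter, Finset.mem_univ, true_and]
    exact measurableSet_le measurable_const (hpm ℓ)
  have hpt : ∀ x, θ * ((Γstar x).card : ℝ) - ∑ ℓ ∈ Γstar x, p x ℓ
      ≤ θ * ((Γ x).card : ℝ) - ∑ ℓ ∈ Γ x, p x ℓ := by
    intro x
    have key : ∀ s : Finset (Fin L), θ * (s.card : ℝ) - ∑ ℓ ∈ s, p x ℓ
        = ∑ ℓ : Fin L, (if ℓ ∈ s then θ - p x ℓ else 0) := by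
      intro s
      rw [Finset.sum_ite_mem, Finset.univ_inter, Finset.sum_sub_distrib]
      simp [mul_comm]
    rw [key, key]
    refine Finset.sum_le_sum fun ℓ _ => ?_
    simp only [hΓstar, Finset.mem_filter, Finset.mem_univ, true_and]
    split_ifs <;> linarith
  have hint := integral_mono ((hSc.const_mul θ).sub hSi) ((hGc.const_mul θ).sub hGi) hpt
  simp only [Pi.sub_apply] at hint
  rw [integral_sub (hSc.const_mul θ) hSi, integral_sub (hGc.const_mul θ) hGi,
    integral_const_mul, integral_const_mul, ← hHθ] at hint
  rw [herr _ hGi] at hΓe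
  refine le_of_mul_le_mul_left ?_ hθ0
  linarith
end

section
/- (Hybrid size control.) Assume the nonatomicity assumption. Fix an integer k ∈ {1,…,L} and a real number k̄ with 0 < k̄ < k. Define G_k(t) = ∑_{ℓ=1}^k μ({x : p_(ℓ)(x) ≥ t}) for t ∈ ℝ, let G_k^{-1} be its generalized inverse, let Top(·, k) be any top-k classifier with respect to p, and define Γ*_{k̄,k}(x) = {ℓ ∈ Fin L : p_ℓ(x) ≥ G_k^{-1}(k̄)} ∩ Top(x, k). Then Γ*_{k̄,k} is feasible, i.e. |Γ*_{k̄,k}(x)| ≤ k for every x and size(Γ*_{k̄,k}) ≤ k̄, and it is optimal: every set-valued classifier Γ satisfying size(Γ) ≤ k̄ and |Γ(x)| ≤ k for μ-almost every x has error(Γ*_{k̄,k}) ≤ error(Γ). -/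
open MeasureTheory Finset

theorem aux_sortedDesc {L : ℕ} (q : Fin L → ℝ) (t : ℝ) (j : Fin L) :
    t ≤ sortedDesc q j ↔ (j : ℕ) < (Finset.univ.filter (fun ℓ => t ≤ q ℓ)).card := by
  have hanti : Antitone (sortedDesc q) := by
    intro a b hab
    exact Tuple.monotone_sort q (Fin.rev_le_rev.mpr hab)
  have h := Tuple.lt_card_ge_iff_apply_ge_of_antitone (f := sortedDesc q) (a := t)
    (j := (j : Fin L)) hanti
  rw [← h]
  have : (Finset.univ.filter (fun i => t ≤ sortedDesc q i)).card
      = (Finset.univ.filter (fun ℓ => t ≤ q ℓ)).card := by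
    refine Finset.card_equiv (Fin.revPerm.trans (Tuple.sort q)) ?_
    intro i
    simp only [Finset.mem_filter, Finset.mem_univ, true_and]
    rfl
  rw [← this]

theorem aux_count {L k : ℕ} (hkL : k ≤ L) (q : Fin L → ℝ) (t : ℝ) (T : Finset (Fin L))
    (hc : T.card = k) (hT : ∀ ℓ ∈ T, ∀ m, m ∉ T → q m ≤ q ℓ) :
    ((Finset.univ.filter (fun j : Fin L => (j : ℕ) < k)).filter
        (fun j => t ≤ sortedDesc q j)).card
      = ((Finset.univ.filter (fun ℓ => t ≤ q ℓ)) ∩ T).card := by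
  set N := (Finset.univ.filter (fun ℓ => t ≤ q ℓ)) with hN
  have hNL : N.card ≤ L := by simpa using Finset.card_le_univ N
  have h1 : ((Finset.univ.filter (fun j : Fin L => (j : ℕ) < k)).filter
        (fun j => t ≤ sortedDesc q j)).card = min k N.card := by
    rw [Finset.filter_filter]
    have : (Finset.univ.filter (fun j : Fin L => (j : ℕ) < k ∧ t ≤ sortedDesc q j))
        = Finset.univ.filter (fun j : Fin L => (j : ℕ) < min k N.card) := by
      ext j
      simp only [Finset.mem_filter, Finset.mem_univ, true_and, aux_sortedDesc, lt_min_iff]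
      rfl
    rw [this, Fin.card_filter_val_lt]
    omega
  rw [h1]
  by_cases h : T ⊆ N
  · rw [Finset.inter_eq_right.mpr h]
    have := Finset.card_le_card h
    omega
  · obtain ⟨ℓ, hℓ, hn⟩ := Finset.not_subset.mp h
    have hs : N ⊆ T := by
      intro m hm
      by_contra hmT
      have h2 := hT ℓ hℓ m hmT
      simp only [hN, Finset.mem_filter, Finset.mem_univ, true_and] at hm hn
      linarith
    rw [Finset.inter_eq_left.mpr hs]
    have := Finset.card_le_card hs
    omega

theorem aux_exchange {L : ℕ} (f : Fin L → ℝ) (hf : ∀ ℓ, 0 ≤ f ℓ) (T S : Finset (Fin L))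
    (hc : S.card ≤ T.card) (hT : ∀ ℓ ∈ T, ∀ m, m ∉ T → f m ≤ f ℓ) :
    ∑ ℓ ∈ S, f ℓ ≤ ∑ ℓ ∈ T, f ℓ := by
  have hcard : (S \ T).card ≤ (T \ S).card := by
    have h1 := Finset.card_sdiff_add_card_inter S T
    have h2 := Finset.card_sdiff_add_card_inter T S
    rw [Finset.inter_comm T S] at h2
    omega
  have key : ∑ ℓ ∈ S \ T, f ℓ ≤ ∑ ℓ ∈ T \ S, f ℓ := by
    rcases (T \ S).eq_empty_or_nonempty with h | h
    · have h0 : S \ T = ∅ := by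
        rw [h] at hcard
        simpa using hcard
      rw [h, h0]
    · obtain ⟨a, ha, hmin⟩ := Finset.exists_min_image (T \ S) f h
      calc ∑ ℓ ∈ S \ T, f ℓ ≤ (S \ T).card • f a := by
            apply Finset.sum_le_card_nsmul
            intro m hm
            exact hT a (Finset.mem_sdiff.mp ha).1 m (Finset.mem_sdiff.mp hm).2
        _ ≤ (T \ S).card • f a := nsmul_le_nsmul_left (hf a) hcard
        _ ≤ ∑ ℓ ∈ T \ S, f ℓ := Finset.card_nsmul_le_sum _ _ _ hmin
  have h1 := Finset.sum_inter_add_sum_sdiff S T f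
  have h2 := Finset.sum_inter_add_sum_sdiff T S f
  rw [Finset.inter_comm T S] at h2
  linarith

theorem aux_pointwise {L : ℕ} (q : Fin L → ℝ) (θ : ℝ) (T S : Finset (Fin L))
    (hc : S.card ≤ T.card) (hT : ∀ ℓ ∈ T, ∀ m, m ∉ T → q m ≤ q ℓ) :
    ∑ ℓ ∈ S, (q ℓ - θ) ≤ ∑ ℓ ∈ (Finset.univ.filter (fun ℓ => θ ≤ q ℓ)) ∩ T, (q ℓ - θ) := by
  calc ∑ ℓ ∈ S, (q ℓ - θ) ≤ ∑ ℓ ∈ S, max (q ℓ - θ) 0 :=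
        Finset.sum_le_sum fun _ _ => le_max_left _ _
    _ ≤ ∑ ℓ ∈ T, max (q ℓ - θ) 0 := by
        apply aux_exchange _ (fun _ => le_max_right _ _) _ _ hc
        intro ℓ hℓ m hm
        exact max_le_max (by linarith [hT ℓ hℓ m hm]) le_rfl
    _ = ∑ ℓ ∈ (Finset.univ.filter (fun ℓ => θ ≤ q ℓ)) ∩ T, (q ℓ - θ) := by
        rw [Finset.filter_inter, Finset.univ_inter, Finset.sum_filter]
        refine Finset.sum_congr rfl fun ℓ _ => ?_
        split_ifs with h
        · exact max_eq_left (by linarith)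
        · exact max_eq_right (by linarith)

theorem aux_meas {𝒳 : Type*} [m𝒳 : MeasurableSpace 𝒳] {L : ℕ} (Γ : 𝒳 → Finset (Fin L))
    (hΓ : @Measurable 𝒳 (Finset (Fin L)) m𝒳 ⊤ Γ) (ℓ : Fin L) :
    MeasurableSet {x | ℓ ∈ Γ x} :=
  hΓ (t := {S | ℓ ∈ S}) trivial

theorem aux_integrable {𝒳 : Type*} [m𝒳 : MeasurableSpace 𝒳] (μ : Measure 𝒳)
    [IsProbabilityMeasure μ] {L : ℕ} (Γ : 𝒳 → Finset (Fin L))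
    (hΓ : ∀ ℓ, MeasurableSet {x | ℓ ∈ Γ x})
    (f : 𝒳 → Fin L → ℝ) (hf : Measurable f) (hf1 : ∀ x ℓ, |f x ℓ| ≤ 1) :
    Integrable (fun x => ∑ ℓ ∈ Γ x, f x ℓ) μ := by
  classical
  have h : (fun x => ∑ ℓ ∈ Γ x, f x ℓ) = fun x => ∑ ℓ, ({x | ℓ ∈ Γ x}.indicator (fun x => f x ℓ) x) := by
    funext x
    simp [Set.indicator_apply]
  rw [h]
  refine integrable_finsetSum _ fun ℓ _ => Integrable.indicator ?_ (hΓ ℓ)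
  refine Integrable.of_bound (C := 1) ((measurable_pi_apply ℓ).comp hf).aestronglyMeasurable ?_
  exact Filter.Eventually.of_forall fun x => hf1 x ℓ

/-- hybrid size control: the intersection of the thresholding
classifier at level G_k⁻¹(k̄) with a top-k classifier is feasible (point-wise
size at most k, average size at most k̄) and minimizes the error rate among
all classifiers satisfying these two constraints. -/
theorem hybrid_size_control_oracle
    {𝒳 : Type*} [m𝒳 : MeasurableSpace 𝒳] (μ : Measure 𝒳) [IsProbabilityMeasure μ]
    (L : ℕ) (hL : 1 ≤ L)
    (p : 𝒳 → Fin L → ℝ) (hp : Measurable p)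
    (hp0 : ∀ x ℓ, 0 ≤ p x ℓ) (hpsum : ∀ x, ∑ ℓ, p x ℓ = 1)
    (hatom : ∀ (ℓ : Fin L) (t : ℝ), μ {x | p x ℓ = t} = 0)
    (k : ℕ) (hk1 : 1 ≤ k) (hkL : k ≤ L)
    (kbar : ℝ) (hkbar0 : 0 < kbar) (hkbark : kbar < k)
    (Gk : ℝ → ℝ)
    (hGk : Gk = fun t =>
      ∑ j ∈ Finset.univ.filter (fun j : Fin L => (j : ℕ) < k),
        (μ {x | t ≤ sortedDesc (p x) j}).toReal)
    (θ : ℝ) (hθ : θ = sInf {t : ℝ | Gk t ≤ kbar})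
    (Top : 𝒳 → Finset (Fin L))
    (hTopMeas : @Measurable 𝒳 (Finset (Fin L)) m𝒳 ⊤ Top)
    (hTopCard : ∀ x, (Top x).card = k)
    (hTopTop : ∀ x, ∀ ℓ ∈ Top x, ∀ m, m ∉ Top x → p x m ≤ p x ℓ)
    (Γstar : 𝒳 → Finset (Fin L))
    (hΓstar : ∀ x, Γstar x = (Finset.univ.filter (fun ℓ => θ ≤ p x ℓ)) ∩ Top x) :
    (∀ x, (Γstar x).card ≤ k) ∧
    (∫ x, ((Γstar x).card : ℝ) ∂μ) ≤ kbar ∧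
    ∀ Γ : 𝒳 → Finset (Fin L), @Measurable 𝒳 (Finset (Fin L)) m𝒳 ⊤ Γ →
      (∫ x, ((Γ x).card : ℝ) ∂μ) ≤ kbar →
      (∀ᵐ x ∂μ, (Γ x).card ≤ k) →
      (∫ x, (1 - ∑ ℓ ∈ Γstar x, p x ℓ) ∂μ) ≤ ∫ x, (1 - ∑ ℓ ∈ Γ x, p x ℓ) ∂μ := by
  classical
  have hpℓ : ∀ ℓ, Measurable fun x => p x ℓ := fun ℓ => (measurable_pi_apply ℓ).comp hp
  have hp1 : ∀ x ℓ, p x ℓ ≤ 1 := fun x ℓ => by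
    rw [← hpsum x]
    exact Finset.single_le_sum (fun i _ => hp0 x i) (Finset.mem_univ ℓ)
  have hpabs : ∀ x ℓ, |p x ℓ| ≤ 1 := fun x ℓ => abs_le.mpr ⟨by linarith [hp0 x ℓ], hp1 x ℓ⟩
  -- the thresholded top-k set
  let A : ℝ → 𝒳 → Finset (Fin L) := fun t x => (Finset.univ.filter (fun ℓ => t ≤ p x ℓ)) ∩ Top x
  have hAmeas : ∀ t ℓ, MeasurableSet {x | ℓ ∈ A t x} := by
    intro t ℓ
    have : {x | ℓ ∈ A t x} = {x | t ≤ p x ℓ} ∩ {x | ℓ ∈ Top x} := by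
      ext x; simp [A]
    rw [this]
    exact (measurableSet_le measurable_const (hpℓ ℓ)).inter (aux_meas Top hTopMeas ℓ)
  have hcardint : ∀ Γ : 𝒳 → Finset (Fin L), (∀ ℓ, MeasurableSet {x | ℓ ∈ Γ x}) →
      Integrable (fun x => ((Γ x).card : ℝ)) μ := by
    intro Γ hΓ
    have := aux_integrable μ Γ hΓ (fun _ _ => 1) measurable_const (by simp)
    simpa using this
  have hAcard : ∀ t x, (A t x).card ≤ k := fun t x => by
    rw [← hTopCard x]
    exact Finset.card_le_card Finset.inter_subset_right
  have hcardmeas : ∀ t, Measurable fun x => (Finset.univ.filter (fun ℓ => t ≤ p x ℓ)).card := by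
    intro t
    simp only [Finset.card_filter]
    refine Finset.measurable_sum _ fun ℓ _ => ?_
    exact Measurable.ite (measurableSet_le measurable_const (hpℓ ℓ)) measurable_const
      measurable_const
  have hsmeas : ∀ t (j : Fin L), MeasurableSet {x | t ≤ sortedDesc (p x) j} := by
    intro t j
    simp only [aux_sortedDesc]
    exact measurableSet_lt measurable_const (hcardmeas t)
  have hG : ∀ t, Gk t = ∫ x, ((A t x).card : ℝ) ∂μ := by
    intro t
    have h1 : (fun x => ((A t x).card : ℝ)) = fun x =>
        ∑ j ∈ Finset.univ.filter (fun j : Fin L => (j : ℕ) < k),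
          {x | t ≤ sortedDesc (p x) j}.indicator (fun _ => (1 : ℝ)) x := by
      funext x
      have := aux_count hkL (p x) t (Top x) (hTopCard x) (hTopTop x)
      simp only [A, ← this, Finset.card_filter]
      push_cast
      rw [Finset.sum_filter, Finset.sum_filter]
      simp [Set.indicator_apply]
    rw [hGk, h1, integral_finsetSum]
    · refine Finset.sum_congr rfl fun j _ => ?_
      rw [integral_indicator (hsmeas t j)]
      simp [Measure.real]
    · intro j _
      exact (integrable_const _).indicator (hsmeas t j)
  have hcont : Continuous Gk := by
    rw [continuous_iff_continuousAt]
    intro t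
    have hGf : Gk = fun t => ∫ x, ((A t x).card : ℝ) ∂μ := funext hG
    rw [hGf]
    refine continuousAt_of_dominated (bound := fun _ => (k : ℝ)) ?_ ?_ (integrable_const _) ?_
    · exact Filter.Eventually.of_forall fun s => (hcardint (A s) (hAmeas s)).aestronglyMeasurable
    · refine Filter.Eventually.of_forall fun s => Filter.Eventually.of_forall fun x => ?_
      simpa using hAcard s x
    · have hne : ∀ᵐ x ∂μ, ∀ ℓ, p x ℓ ≠ t := by
        rw [ae_all_iff]
        intro ℓ
        rw [ae_iff]
        simpa using hatom ℓ t
      filter_upwards [hne] with x hx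
      have hev : ∀ᶠ s in nhds t, ∀ ℓ, (s ≤ p x ℓ ↔ t ≤ p x ℓ) := by
        rw [Filter.eventually_all]
        intro ℓ
        rcases lt_or_gt_of_ne (hx ℓ) with h | h
        · filter_upwards [lt_mem_nhds h] with s hs
          exact ⟨fun h' => absurd h' (not_le.mpr hs), fun h' => absurd h' (not_le.mpr h)⟩
        · filter_upwards [gt_mem_nhds h] with s hs
          exact ⟨fun _ => h.le, fun _ => hs.le⟩
      have hev2 : (fun s => ((A s x).card : ℝ)) =ᶠ[nhds t] fun _ => ((A t x).card : ℝ) := by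
        filter_upwards [hev] with s hs
        simp only [A, hs]
      exact (continuousAt_congr hev2).mpr continuousAt_const
  have hne : {t : ℝ | Gk t ≤ kbar}.Nonempty := by
    refine ⟨2, ?_⟩
    have : ∀ x, A 2 x = ∅ := by
      intro x
      ext ℓ
      have := hp1 x ℓ
      simp only [A, Finset.mem_inter, Finset.mem_filter, Finset.mem_univ, true_and,
        Finset.notMem_empty, iff_false, not_and]
      intro h
      linarith
    simp [hG, this, hkbar0.le]
  have hlow : ∀ t ∈ {t : ℝ | Gk t ≤ kbar}, 0 ≤ t := by
    intro t ht
    by_contra hneg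
    push Not at hneg
    have : ∀ x, A t x = Top x := by
      intro x
      ext ℓ
      have := hp0 x ℓ
      simp only [A, Finset.mem_inter, Finset.mem_filter, Finset.mem_univ, true_and,
        and_iff_right_iff_imp]
      intro _
      linarith
    simp [hG, this, hTopCard] at ht
    linarith
  have hbdd : BddBelow {t : ℝ | Gk t ≤ kbar} := ⟨0, hlow⟩
  have hθ0 : 0 ≤ θ := by
    rw [hθ]
    exact le_csInf hne hlow
  have hθle : Gk θ ≤ kbar := by
    have : θ ∈ {t : ℝ | Gk t ≤ kbar} := by
      rw [hθ]
      exact (isClosed_le hcont continuous_const).csInf_mem hne hbdd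
    exact this
  have hθge : kbar ≤ Gk θ := by
    have ht : Filter.Tendsto Gk (nhdsWithin θ (Set.Iio θ)) (nhds (Gk θ)) :=
      hcont.continuousAt.tendsto.mono_left nhdsWithin_le_nhds
    refine ge_of_tendsto ht ?_
    filter_upwards [self_mem_nhdsWithin] with s hs
    by_contra hlt
    push Not at hlt
    have : θ ≤ s := by
      rw [hθ]
      exact csInf_le hbdd hlt.le
    exact absurd hs (not_lt.mpr this)
  have hΓA : Γstar = A θ := funext hΓstar
  subst hΓA
  refine ⟨hAcard θ, by rw [← hG]; exact hθle, ?_⟩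
  intro Γ hΓ hsize hcard
  have hΓm := aux_meas Γ hΓ
  have i1 := aux_integrable μ (A θ) (hAmeas θ) p hp hpabs
  have i2 := aux_integrable μ Γ hΓm p hp hpabs
  have c1 := hcardint (A θ) (hAmeas θ)
  have c2 := hcardint Γ hΓm
  have hmono : ∫ x, (∑ ℓ ∈ Γ x, p x ℓ - θ * (Γ x).card) ∂μ
      ≤ ∫ x, (∑ ℓ ∈ A θ x, p x ℓ - θ * (A θ x).card) ∂μ := by
    refine integral_mono_ae (i2.sub (c2.const_mul θ)) (i1.sub (c1.const_mul θ)) ?_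
    filter_upwards [hcard] with x hx
    have := aux_pointwise (p x) θ (Top x) (Γ x) (by rw [hTopCard]; exact hx) (hTopTop x)
    simp only [Finset.sum_sub_distrib, Finset.sum_const, nsmul_eq_mul] at this
    simp only [A]
    linarith
  rw [integral_sub i2 (c2.const_mul θ), integral_sub i1 (c1.const_mul θ),
    integral_const_mul, integral_const_mul, ← hG] at hmono
  rw [integral_sub (integrable_const _) i1, integral_sub (integrable_const _) i2]
  have : θ * ∫ x, ((Γ x).card : ℝ) ∂μ ≤ θ * Gk θ :=
    mul_le_mul_of_nonneg_left (hsize.trans hθge) hθ0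
  linarith
end

section
/- Fix k ∈ {1,…,L}, let Γ_k be a top-k classifier with respect to p, and set ε_k = error(Γ_k) (that is, ε_k = P(Y ∉ Top(X, k))). If ε̄ < ε_k, then the joint constraint set is empty: there exists no set-valued classifier Γ satisfying both error(Γ) ≤ ε̄ and |Γ(x)| ≤ k for μ-almost every x. -/
open MeasureTheory Finset

theorem top_sum_le {L : ℕ} (q : Fin L → ℝ) (h0 : ∀ l, 0 ≤ q l) (A B : Finset (Fin L))
    (hc : B.card ≤ A.card) (hT : ∀ l ∈ A, ∀ m, m ∉ A → q m ≤ q l) :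
    ∑ l ∈ B, q l ≤ ∑ l ∈ A, q l := by
  have hA := Finset.sum_inter_add_sum_sdiff A B q
  have hB := Finset.sum_inter_add_sum_sdiff B A q
  rw [Finset.inter_comm] at hB
  have hcard : (B \ A).card ≤ (A \ B).card := by
    have h1 := Finset.card_inter_add_card_sdiff A B
    have h2 := Finset.card_inter_add_card_sdiff B A
    rw [Finset.inter_comm] at h2
    omega
  have key : ∑ l ∈ B \ A, q l ≤ ∑ l ∈ A \ B, q l := by
    rcases (B \ A).eq_empty_or_nonempty with he | hne
    · rw [he, Finset.sum_empty]
      exact Finset.sum_nonneg fun l _ => h0 l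
    · obtain ⟨m, hm, hmax⟩ := Finset.exists_max_image (B \ A) q hne
      have h1 := Finset.sum_le_card_nsmul (B \ A) q (q m) hmax
      have h2 := Finset.card_nsmul_le_sum (A \ B) q (q m)
        (fun l hl => hT l (Finset.mem_sdiff.mp hl).1 m (Finset.mem_sdiff.mp hm).2)
      exact h1.trans ((nsmul_le_nsmul_left (h0 m) hcard).trans h2)
  linarith

/-- if ε̄ is strictly smaller than the error rate ε_k of a top-k
classifier, then there is no set-valued classifier satisfying both the average
error constraint ε̄ and the point-wise size constraint k (μ-a.e.). -/
theorem empty_feasible_set_error_and_size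
    {𝒳 : Type*} [m𝒳 : MeasurableSpace 𝒳] (μ : Measure 𝒳) [IsProbabilityMeasure μ]
    (L : ℕ) (hL : 1 ≤ L)
    (p : 𝒳 → Fin L → ℝ) (hp : Measurable p)
    (hp0 : ∀ x ℓ, 0 ≤ p x ℓ) (hpsum : ∀ x, ∑ ℓ, p x ℓ = 1)
    (k : ℕ) (hk1 : 1 ≤ k) (hkL : k ≤ L)
    (Γk : 𝒳 → Finset (Fin L))
    (hΓkMeas : @Measurable 𝒳 (Finset (Fin L)) m𝒳 ⊤ Γk)
    (hΓkCard : ∀ x, (Γk x).card = k)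
    (hΓkTop : ∀ x, ∀ ℓ ∈ Γk x, ∀ m, m ∉ Γk x → p x m ≤ p x ℓ)
    (εk : ℝ) (hεk : εk = ∫ x, (1 - ∑ ℓ ∈ Γk x, p x ℓ) ∂μ)
    (εbar : ℝ) (hεbar : εbar < εk) :
    ¬ ∃ Γ : 𝒳 → Finset (Fin L),
        @Measurable 𝒳 (Finset (Fin L)) m𝒳 ⊤ Γ ∧
        (∫ x, (1 - ∑ ℓ ∈ Γ x, p x ℓ) ∂μ) ≤ εbar ∧
        (∀ᵐ x ∂μ, (Γ x).card ≤ k) := by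
  rintro ⟨Γ, hΓ, herr, hcard⟩
  have hle1 : ∀ (x : 𝒳) (S : Finset (Fin L)), ∑ ℓ ∈ S, p x ℓ ≤ 1 := fun x S => by
    rw [← hpsum x]
    exact Finset.sum_le_sum_of_subset_of_nonneg (Finset.subset_univ S) fun ℓ _ _ => hp0 x ℓ
  have hge0 : ∀ (x : 𝒳) (S : Finset (Fin L)), 0 ≤ ∑ ℓ ∈ S, p x ℓ := fun x S =>
    Finset.sum_nonneg fun ℓ _ => hp0 x ℓ
  have hmeas : Measurable fun x => 1 - ∑ ℓ ∈ Γ x, p x ℓ := by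
    have he : (fun x => 1 - ∑ ℓ ∈ Γ x, p x ℓ)
        = fun x => 1 - ∑ ℓ, if ℓ ∈ Γ x then p x ℓ else 0 := by
      funext x
      simp
    rw [he]
    refine measurable_const.sub (Finset.measurable_fun_sum _ fun ℓ _ => ?_)
    refine Measurable.ite ?_ ((measurable_pi_apply ℓ).comp hp) measurable_const
    exact @hΓ {S | ℓ ∈ S} trivial
  have hint : Integrable (fun x => 1 - ∑ ℓ ∈ Γ x, p x ℓ) μ := by
    refine Integrable.of_bound hmeas.aestronglyMeasurable 1 (Filter.Eventually.of_forall fun x => ?_)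
    rw [Real.norm_eq_abs, abs_le]
    have h1 := hle1 x (Γ x)
    have h2 := hge0 x (Γ x)
    constructor <;> linarith
  have hmono : ∫ x, (1 - ∑ ℓ ∈ Γk x, p x ℓ) ∂μ ≤ ∫ x, (1 - ∑ ℓ ∈ Γ x, p x ℓ) ∂μ := by
    refine integral_mono_of_nonneg
      (Filter.Eventually.of_forall fun x => sub_nonneg.mpr (hle1 x (Γk x))) hint ?_
    filter_upwards [hcard] with x hx
    have := top_sum_le (p x) (hp0 x) (Γk x) (Γ x) (by rw [hΓkCard x]; exact hx) (hΓkTop x)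
    linarith
  linarith
end

section
/- (F-score oracle.) Fix β > 0 and let θ* be the unique root of θ ↦ β²θ − ∑_{ℓ=1}^L ∫ max(p_ℓ(x) − θ, 0) dμ(x). Define the set-valued classifier Γ*_F by Γ*_F(x) = {ℓ ∈ Fin L : p_ℓ(x) ≥ θ*}. Then Γ*_F maximizes the F_β-score: for every set-valued classifier Γ, F_β(Γ) ≤ F_β(Γ*_F), where F_β(Γ) = (1 + β²)(1 − error(Γ)) / (β² + size(Γ)). -/
open MeasureTheory Finset

theorem fscore_aux_integrable
    {𝒳 : Type*} [m𝒳 : MeasurableSpace 𝒳] (μ : Measure 𝒳) [IsProbabilityMeasure μ]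
    (L : ℕ) (f : 𝒳 → Fin L → ℝ) (hf : ∀ ℓ, Integrable (fun x => f x ℓ) μ)
    (G : 𝒳 → Finset (Fin L)) (hG : ∀ ℓ, MeasurableSet {x | ℓ ∈ G x}) :
    Integrable (fun x => ∑ ℓ ∈ G x, f x ℓ) μ := by
  have h : (fun x => ∑ ℓ ∈ G x, f x ℓ)
      = fun x => ∑ ℓ : Fin L, Set.indicator {x | ℓ ∈ G x} (fun x => f x ℓ) x := by
    funext x
    simp [Set.indicator_apply, Finset.sum_ite_mem]
  rw [h]
  exact integrable_finsetSum _ fun ℓ _ => (hf ℓ).indicator (hG ℓ)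

/-- F-score oracle: the thresholding classifier at the unique
root θ* of θ ↦ β²θ − ∑_ℓ ∫ (p_ℓ(x) − θ)₊ dμ(x) maximizes the F_β-score
F_β(Γ) = (1 + β²)(1 − error(Γ)) / (β² + size(Γ)). -/
theorem fscore_oracle
    {𝒳 : Type*} [m𝒳 : MeasurableSpace 𝒳] (μ : Measure 𝒳) [IsProbabilityMeasure μ]
    (L : ℕ) (hL : 1 ≤ L)
    (p : 𝒳 → Fin L → ℝ) (hp : Measurable p)
    (hp0 : ∀ x ℓ, 0 ≤ p x ℓ) (hpsum : ∀ x, ∑ ℓ, p x ℓ = 1)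
    (β : ℝ) (hβ : 0 < β)
    (θstar : ℝ)
    (hθstar : β ^ 2 * θstar - ∑ ℓ : Fin L, ∫ x, max (p x ℓ - θstar) 0 ∂μ = 0)
    (Γstar : 𝒳 → Finset (Fin L))
    (hΓstar : ∀ x, Γstar x = Finset.univ.filter (fun ℓ => θstar ≤ p x ℓ))
    (Γ : 𝒳 → Finset (Fin L))
    (hΓMeas : @Measurable 𝒳 (Finset (Fin L)) m𝒳 ⊤ Γ) :
    (1 + β ^ 2) * (1 - ∫ x, (1 - ∑ ℓ ∈ Γ x, p x ℓ) ∂μ) /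
        (β ^ 2 + ∫ x, ((Γ x).card : ℝ) ∂μ) ≤
      (1 + β ^ 2) * (1 - ∫ x, (1 - ∑ ℓ ∈ Γstar x, p x ℓ) ∂μ) /
        (β ^ 2 + ∫ x, ((Γstar x).card : ℝ) ∂μ) := by
  have hp1 : ∀ x ℓ, p x ℓ ≤ 1 := fun x ℓ => by
    rw [← hpsum x]
    exact Finset.single_le_sum (f := p x) (fun i _ => hp0 x i) (Finset.mem_univ ℓ)
  have hpm : ∀ ℓ, Measurable (fun x => p x ℓ) := fun ℓ => (measurable_pi_apply ℓ).comp hp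
  have hpi : ∀ ℓ, Integrable (fun x => p x ℓ) μ := fun ℓ =>
    Integrable.of_bound (hpm ℓ).aestronglyMeasurable 1
      (Filter.Eventually.of_forall fun x => by
        rw [Real.norm_eq_abs, abs_of_nonneg (hp0 x ℓ)]; exact hp1 x ℓ)
  have hG : ∀ ℓ, MeasurableSet {x | ℓ ∈ Γ x} := fun ℓ =>
    hΓMeas (t := {s : Finset (Fin L) | ℓ ∈ s}) trivial
  have hGs : ∀ ℓ, MeasurableSet {x | ℓ ∈ Γstar x} := fun ℓ => by
    have : {x | ℓ ∈ Γstar x} = {x | θstar ≤ p x ℓ} := by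
      ext x; simp [hΓstar]
    rw [this]
    exact measurableSet_le measurable_const (hpm ℓ)
  have hmi : ∀ ℓ, Integrable (fun x => max (p x ℓ - θstar) 0) μ := fun ℓ =>
    ((hpi ℓ).sub (integrable_const θstar)).pos_part
  have hsum : ∫ x, ∑ ℓ, max (p x ℓ - θstar) 0 ∂μ = β ^ 2 * θstar := by
    rw [integral_finsetSum _ fun ℓ _ => hmi ℓ]
    linarith
  -- decomposition for any classifier with measurable sections
  have key : ∀ G : 𝒳 → Finset (Fin L), (∀ ℓ, MeasurableSet {x | ℓ ∈ G x}) →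
      (1 - ∫ x, (1 - ∑ ℓ ∈ G x, p x ℓ) ∂μ) - θstar * ∫ x, ((G x).card : ℝ) ∂μ
        = ∫ x, ∑ ℓ ∈ G x, (p x ℓ - θstar) ∂μ := by
    intro G hGm
    have h1 := fscore_aux_integrable μ L p hpi G hGm
    have h2 := fscore_aux_integrable μ L (fun _ _ => (1 : ℝ)) (fun _ => integrable_const _) G hGm
    have h2' : Integrable (fun x => ((G x).card : ℝ)) μ := by simpa using h2
    rw [integral_sub (integrable_const _) h1]
    have : ∀ x, ∑ ℓ ∈ G x, (p x ℓ - θstar) = ∑ ℓ ∈ G x, p x ℓ - θstar * ((G x).card : ℝ) := by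
      intro x
      rw [Finset.sum_sub_distrib]; simp [mul_comm]
    simp_rw [this]
    rw [integral_sub h1 (h2'.const_mul _), integral_const_mul]
    simp
  have kG := key Γ hG
  have kS := key Γstar hGs
  have hle : ∫ x, ∑ ℓ ∈ Γ x, (p x ℓ - θstar) ∂μ ≤ β ^ 2 * θstar := by
    rw [← hsum]
    refine integral_mono (fscore_aux_integrable μ L (fun x ℓ => p x ℓ - θstar)
      (fun ℓ => (hpi ℓ).sub (integrable_const _)) Γ hG)
      (integrable_finsetSum _ fun ℓ _ => hmi ℓ) fun x => ?_
    calc ∑ ℓ ∈ Γ x, (p x ℓ - θstar) ≤ ∑ ℓ ∈ Γ x, max (p x ℓ - θstar) 0 :=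
          Finset.sum_le_sum fun ℓ _ => le_max_left _ _
      _ ≤ ∑ ℓ, max (p x ℓ - θstar) 0 :=
          Finset.sum_le_sum_of_subset_of_nonneg (Finset.subset_univ _)
            fun ℓ _ _ => le_max_right _ _
  have heq : ∫ x, ∑ ℓ ∈ Γstar x, (p x ℓ - θstar) ∂μ = β ^ 2 * θstar := by
    rw [← hsum]
    congr 1
    funext x
    rw [hΓstar, Finset.sum_filter]
    refine Finset.sum_congr rfl fun ℓ _ => ?_
    split_ifs with h
    · rw [max_eq_left (by linarith)]
    · rw [max_eq_right (by linarith)]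
  have hb : 0 < β ^ 2 := by positivity
  have c1 : 0 ≤ ∫ x, ((Γ x).card : ℝ) ∂μ := integral_nonneg fun x => by positivity
  have c2 : 0 ≤ ∫ x, ((Γstar x).card : ℝ) ∂μ := integral_nonneg fun x => by positivity
  rw [mul_div_assoc, mul_div_assoc]
  refine mul_le_mul_of_nonneg_left ?_ (by positivity)
  refine le_trans (b := θstar) ?_ ?_
  · rw [div_le_iff₀ (by linarith)]; linarith
  · rw [le_div_iff₀ (by linarith)]; linarith
end

section
/- Assume the nonatomicity assumption and fix an integer k ∈ {1,…,L−1}. Define G(t) = ∑_{ℓ=1}^L μ({x : p_ℓ(x) ≥ t}), let G^{-1} be its generalized inverse, and let Γ*_{k̄}(x) = {ℓ ∈ Fin L : p_ℓ(x) ≥ G^{-1}(k)} be the average-size-control classifier with budget k̄ = k. Then for every top-k classifier Γ_k with respect to p, one has error(Γ*_{k̄}) ≤ error(Γ_k); that is, the average size control solution with budget k achieves an error rate no larger than that of the top-k classifier, since the top-k classifier has average size exactly k and is hence feasible for the average size constraint. -/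
open MeasureTheory Finset

/-- under nonatomicity, the average-size-control classifier with
budget k̄ = k achieves an error rate no larger than that of any top-k
classifier. -/
theorem average_size_control_beats_topK
    {𝒳 : Type*} [m𝒳 : MeasurableSpace 𝒳] (μ : Measure 𝒳) [IsProbabilityMeasure μ]
    (L : ℕ) (hL : 1 ≤ L)
    (p : 𝒳 → Fin L → ℝ) (hp : Measurable p)
    (hp0 : ∀ x ℓ, 0 ≤ p x ℓ) (hpsum : ∀ x, ∑ ℓ, p x ℓ = 1)
    (hatom : ∀ (ℓ : Fin L) (t : ℝ), μ {x | p x ℓ = t} = 0)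
    (k : ℕ) (hk1 : 1 ≤ k) (hkL : k < L)
    (G : ℝ → ℝ) (hG : G = fun t => ∑ ℓ : Fin L, (μ {x | t ≤ p x ℓ}).toReal)
    (θ : ℝ) (hθ : θ = sInf {t : ℝ | G t ≤ (k : ℝ)})
    (Γstar : 𝒳 → Finset (Fin L))
    (hΓstar : ∀ x, Γstar x = Finset.univ.filter (fun ℓ => θ ≤ p x ℓ))
    (Γk : 𝒳 → Finset (Fin L))
    (hΓkMeas : @Measurable 𝒳 (Finset (Fin L)) m𝒳 ⊤ Γk)
    (hΓkCard : ∀ x, (Γk x).card = k)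
    (hΓkTop : ∀ x, ∀ ℓ ∈ Γk x, ∀ m, m ∉ Γk x → p x m ≤ p x ℓ) :
    ∫ x, (1 - ∑ ℓ ∈ Γstar x, p x ℓ) ∂μ ≤ ∫ x, (1 - ∑ ℓ ∈ Γk x, p x ℓ) ∂μ := by
  have hpm : ∀ ℓ, Measurable fun x => p x ℓ := fun ℓ => (measurable_pi_apply ℓ).comp hp
  have hple : ∀ x ℓ, p x ℓ ≤ 1 := fun x ℓ => by
    rw [← hpsum x]
    exact Finset.single_le_sum (f := fun ℓ => p x ℓ) (fun i _ => hp0 x i) (Finset.mem_univ ℓ)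
  have hms : ∀ t ℓ, MeasurableSet {x | t ≤ p x ℓ} := fun t ℓ =>
    measurableSet_le measurable_const (hpm ℓ)
  have hmk : ∀ ℓ, MeasurableSet {x | ℓ ∈ Γk x} := fun ℓ => by
    have : @MeasurableSet (Finset (Fin L)) ⊤ {s | ℓ ∈ s} := trivial
    exact hΓkMeas this
  have hpint : ∀ ℓ, Integrable (fun x => p x ℓ) μ := fun ℓ => by
    refine Integrable.of_bound (hpm ℓ).aestronglyMeasurable 1 (Filter.Eventually.of_forall ?_)
    intro x
    rw [Real.norm_eq_abs, abs_of_nonneg (hp0 x ℓ)]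
    exact hple x ℓ
  have hSeq : (fun x => ∑ ℓ ∈ Γstar x, p x ℓ) =
      fun x => ∑ ℓ, {x | θ ≤ p x ℓ}.indicator (fun x => p x ℓ) x := by
    funext x
    rw [hΓstar, Finset.sum_filter]
    simp [Set.indicator_apply]
  have hKeq : (fun x => ∑ ℓ ∈ Γk x, p x ℓ) =
      fun x => ∑ ℓ, {x | ℓ ∈ Γk x}.indicator (fun x => p x ℓ) x := by
    funext x
    simp [Set.indicator_apply, Finset.sum_ite_mem]
  have hSint : Integrable (fun x => ∑ ℓ ∈ Γstar x, p x ℓ) μ := by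
    rw [hSeq]
    exact integrable_finsetSum _ fun ℓ _ => (hpint ℓ).indicator (hms θ ℓ)
  have hKint : Integrable (fun x => ∑ ℓ ∈ Γk x, p x ℓ) μ := by
    rw [hKeq]
    exact integrable_finsetSum _ fun ℓ _ => (hpint ℓ).indicator (hmk ℓ)
  have hone : ∀ ℓ, Integrable ({x | θ ≤ p x ℓ}.indicator (fun _ => (1 : ℝ))) μ := fun ℓ =>
    (integrable_const (1 : ℝ)).indicator (hms θ ℓ)
  have hCint : Integrable (fun x => ∑ ℓ, {x | θ ≤ p x ℓ}.indicator (fun _ => (1 : ℝ)) x) μ :=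
    integrable_finsetSum _ fun ℓ _ => hone ℓ
  have hC : ∫ x, ∑ ℓ, {x | θ ≤ p x ℓ}.indicator (fun _ => (1 : ℝ)) x ∂μ = G θ := by
    rw [integral_finsetSum _ fun ℓ _ => hone ℓ, hG]
    refine Finset.sum_congr rfl fun ℓ _ => ?_
    rw [integral_indicator (hms θ ℓ)]
    simp [Measure.real]
  -- the threshold
  have hlow : ∀ t, t ∈ {t : ℝ | G t ≤ (k : ℝ)} → 0 ≤ t := by
    intro t ht
    by_contra hneg
    push Not at hneg
    have h1 : ∀ ℓ, {x | t ≤ p x ℓ} = Set.univ := fun ℓ =>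
      Set.eq_univ_of_forall fun x => hneg.le.trans (hp0 x ℓ)
    have h2 : G t = L := by
      rw [hG]; simp [h1]
    have h3 : (L : ℝ) ≤ k := by rw [← h2]; exact ht
    have h4 : L ≤ k := by exact_mod_cast h3
    omega
  have hne : (2 : ℝ) ∈ {t : ℝ | G t ≤ (k : ℝ)} := by
    have h1 : ∀ ℓ, {x | (2 : ℝ) ≤ p x ℓ} = ∅ := fun ℓ =>
      Set.eq_empty_of_forall_notMem fun x hx => by
        have h := hple x ℓ
        have h' : (2 : ℝ) ≤ p x ℓ := hx
        linarith
    have h2 : G 2 = 0 := by rw [hG]; simp [h1]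
    simp [h2]
  have hθ0 : 0 ≤ θ := by rw [hθ]; exact le_csInf ⟨2, hne⟩ hlow
  have hbig : ∀ t < θ, (k : ℝ) ≤ G t := fun t ht => by
    by_contra hc
    push Not at hc
    have : θ ≤ t := by rw [hθ]; exact csInf_le ⟨0, hlow⟩ hc.le
    linarith
  have hlim : Filter.Tendsto (fun n : ℕ => G (θ - 1 / ((n : ℝ) + 1))) Filter.atTop
      (nhds (G θ)) := by
    rw [hG]
    refine tendsto_finsetSum _ fun ℓ _ => ?_
    refine (ENNReal.tendsto_toReal (measure_ne_top _ _)).comp ?_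
    have hI : {x | θ ≤ p x ℓ} = ⋂ n : ℕ, {x | θ - 1 / ((n : ℝ) + 1) ≤ p x ℓ} := by
      ext x
      simp only [Set.mem_ofPred_eq, Set.mem_iInter]
      constructor
      · intro h n
        have : (0 : ℝ) < 1 / ((n : ℝ) + 1) := by positivity
        linarith
      · intro h
        by_contra hc
        push Not at hc
        obtain ⟨n, hn⟩ := exists_nat_one_div_lt (sub_pos.2 hc)
        have := h n
        linarith
    rw [hI]
    refine tendsto_measure_iInter_atTop (fun n => (hms _ ℓ).nullMeasurableSet) ?_
      ⟨0, measure_ne_top _ _⟩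
    intro a b hab x hx
    have h1 : 1 / ((b : ℝ) + 1) ≤ 1 / ((a : ℝ) + 1) := Nat.one_div_le_one_div hab
    have h2 : θ - 1 / ((b : ℝ) + 1) ≤ p x ℓ := hx
    change θ - 1 / ((a : ℝ) + 1) ≤ p x ℓ
    linarith
  have hGk : (k : ℝ) ≤ G θ := by
    refine ge_of_tendsto' hlim fun n => hbig _ ?_
    have : (0 : ℝ) < 1 / ((n : ℝ) + 1) := by positivity
    linarith
  -- pointwise comparison
  have hpt : ∀ x, ∑ ℓ ∈ Γk x, p x ℓ +
      θ * (∑ ℓ, {x | θ ≤ p x ℓ}.indicator (fun _ => (1 : ℝ)) x - k) ≤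
      ∑ ℓ ∈ Γstar x, p x ℓ := by
    intro x
    have e1 := congrFun hSeq x
    have e2 := congrFun hKeq x
    have e3 : (k : ℝ) = ∑ ℓ, {x | ℓ ∈ Γk x}.indicator (fun _ => (1 : ℝ)) x := by
      rw [← hΓkCard x]
      simp [Set.indicator_apply, Finset.sum_ite_mem]
    rw [e1, e2, e3, ← Finset.sum_sub_distrib, Finset.mul_sum, ← Finset.sum_add_distrib]
    refine Finset.sum_le_sum fun ℓ _ => ?_
    simp only [Set.indicator_apply, Set.mem_ofPred_eq]
    split_ifs <;> linarith
  have hD : Integrable (fun x =>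
      θ * (∑ ℓ, {x | θ ≤ p x ℓ}.indicator (fun _ => (1 : ℝ)) x - k)) μ :=
    (hCint.sub (integrable_const (k : ℝ))).const_mul θ
  have hmain := integral_mono (hKint.add hD)
    hSint hpt
  have hsplit : ∫ x, (∑ ℓ ∈ Γk x, p x ℓ +
      θ * (∑ ℓ, {x | θ ≤ p x ℓ}.indicator (fun _ => (1 : ℝ)) x - k)) ∂μ =
      ∫ x, ∑ ℓ ∈ Γk x, p x ℓ ∂μ + θ * (G θ - k) := by
    rw [integral_add hKint hD,
      integral_const_mul, integral_sub hCint (integrable_const (k : ℝ)), hC]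
    simp
  have hmain2 := hsplit.symm.trans_le hmain
  have hpos : 0 ≤ θ * (G θ - k) := mul_nonneg hθ0 (sub_nonneg.2 hGk)
  rw [integral_sub (integrable_const _) hSint, integral_sub (integrable_const _) hKint]
  linarith
end
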